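/- (Spectral gap / derivative-form Efron–Stein inequality.) Let X : ℝ^E → ℝ be continuously differentiable. Then Var_ℙ(X) ≤ ( Σ_{e∈E} E_ℙ[ sup_{t∈[α,β]} |∂X/∂x_e (ω[e↦t])|² ] ) · σ²(ν), where Var_ℙ(X) is the variance of X under ℙ and the expectation E_ℙ is over ω distributed according to ℙ. -/

import Mathlib

/-!
On a product of two probability spaces, the law of total variance writes `Var f` as the mean of the
variances in the second variable plus the variance of the partial mean in that variable; by Jensen's
inequality the latter is at most the mean of the variances in the first variable. Applied to the
splitting of the coordinates into `s` and its complement, this makes the mean conditional variance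
given the coordinates outside `s` subadditive in `s`, whence the Efron–Stein inequality. A single
coordinate is then handled by the mean value theorem, since a `K`-Lipschitz function multiplies the
variance of a random variable by at most `K ^ 2`. Working with `ℝ≥0∞`-valued variances dispenses
with square-integrability.
-/

open MeasureTheory

open ProbabilityTheory
open scoped ENNReal NNReal

section Variance

variable {Ω Ω' : Type*} [MeasurableSpace Ω] [MeasurableSpace Ω']

lemma lintegral_enorm_sq_eq_evariance_add {μ : Measure Ω} [IsProbabilityMeasure μ] {X : Ω → ℝ}
    (hX : AEStronglyMeasurable X μ) :
    ∫⁻ ω, ‖X ω‖ₑ ^ 2 ∂μ = eVar[X; μ] + ‖∫ ω, X ω ∂μ‖ₑ ^ 2 := by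
  have enorm_sq (x : ℝ) : ‖x‖ₑ ^ 2 = ENNReal.ofReal (x ^ 2) := by
    rw [← enorm_pow, Real.enorm_of_nonneg (sq_nonneg x)]
  by_cases hX2 : MemLp X 2 μ
  · simp only [enorm_sq]
    rw [← ofReal_variance hX2, ← ENNReal.ofReal_add (variance_nonneg X μ) (sq_nonneg _),
      variance_eq_sub hX2, sub_add_cancel]
    exact (ofReal_integral_eq_lintegral_ofReal hX2.integrable_sq
      (ae_of_all μ fun ω => sq_nonneg (X ω))).symm
  · have evariance_le : eVar[X; μ] ≤ ∫⁻ ω, ‖X ω‖ₑ ^ 2 ∂μ :=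
      (evariance_def' hX).trans_le tsub_le_self
    rw [evariance_eq_top hX hX2, top_le_iff] at evariance_le
    rw [evariance_le, evariance_eq_top hX hX2, top_add]

lemma enorm_integral_sq_le_lintegral_enorm_sq {μ : Measure Ω} [IsProbabilityMeasure μ] {X : Ω → ℝ}
    (hX : AEStronglyMeasurable X μ) : ‖∫ ω, X ω ∂μ‖ₑ ^ 2 ≤ ∫⁻ ω, ‖X ω‖ₑ ^ 2 ∂μ :=
  le_add_self.trans_eq (lintegral_enorm_sq_eq_evariance_add hX).symm

lemma lintegral_enorm_sub_sq_eq_evariance_add {μ : Measure Ω} [IsProbabilityMeasure μ]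
    {X : Ω → ℝ} (hX : Integrable X μ) (c : ℝ) :
    ∫⁻ ω, ‖X ω - c‖ₑ ^ 2 ∂μ = eVar[X; μ] + ‖∫ ω, X ω ∂μ - c‖ₑ ^ 2 := by
  have integral_sub_const : ∫ ω, (X ω - c) ∂μ = ∫ ω, X ω ∂μ - c := by
    simp [integral_sub hX (integrable_const c)]
  have sub_const_aestronglyMeasurable : AEStronglyMeasurable (fun ω => X ω - c) μ := by fun_prop
  rw [lintegral_enorm_sq_eq_evariance_add sub_const_aestronglyMeasurable]
  simp only [evariance, integral_sub_const, sub_sub_sub_cancel_right]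

lemma evariance_const {μ : Measure Ω} [IsProbabilityMeasure μ] (c : ℝ) :
    eVar[fun _ => c; μ] = 0 := by
  simp [evariance]

lemma evariance_comp_measurePreserving {μ : Measure Ω} {ρ : Measure Ω'} {T : Ω → Ω'}
    (hT : MeasurePreserving T μ ρ) {f : Ω' → ℝ} (hf : Measurable f) :
    eVar[fun ω => f (T ω); μ] = eVar[f; ρ] := by
  have integral_eq : ∫ ω, f (T ω) ∂μ = ∫ x, f x ∂ρ := by
    rw [← hT.map_eq, integral_map hT.aemeasurable hf.aestronglyMeasurable]
  simp only [evariance, integral_eq]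
  exact hT.lintegral_comp ((hf.sub_const _).enorm.pow_const 2)

lemma measurable_evariance_prodMk_left {ρ : Measure Ω'} [SFinite ρ] {f : Ω × Ω' → ℝ}
    (hf : Measurable f) : Measurable fun x => eVar[fun y => f (x, y); ρ] := by
  have integral_measurable : Measurable fun x => ∫ y, f (x, y) ∂ρ :=
    hf.stronglyMeasurable.integral_prod_right'.measurable
  exact ((hf.sub (integral_measurable.comp measurable_fst)).enorm.pow_const 2).lintegral_prod_right'

lemma evariance_integral_le_lintegral_evariance {μ : Measure Ω} {ρ : Measure Ω'} [SFinite μ]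
    [IsProbabilityMeasure ρ] {f : Ω × Ω' → ℝ} (hfm : Measurable f)
    (hf : Integrable f (μ.prod ρ)) :
    eVar[fun x => ∫ y, f (x, y) ∂ρ; μ] ≤ ∫⁻ y, eVar[fun x => f (x, y); μ] ∂ρ := by
  let h (y : Ω') : ℝ := ∫ x, f (x, y) ∂μ
  have h_measurable : Measurable h := hfm.stronglyMeasurable.integral_prod_left'.measurable
  have integral_h : ∫ y, h y ∂ρ = ∫ x, ∫ y, f (x, y) ∂ρ ∂μ := by
    rw [← integral_prod f hf, integral_prod_symm f hf]
  calc eVar[fun x => ∫ y, f (x, y) ∂ρ; μ]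
      = ∫⁻ x, ‖∫ y, (f (x, y) - h y) ∂ρ‖ₑ ^ 2 ∂μ := by
        refine lintegral_congr_ae ?_
        filter_upwards [hf.prod_right_ae] with x hx
        rw [integral_sub hx hf.integral_prod_right, integral_h]
    _ ≤ ∫⁻ x, ∫⁻ y, ‖f (x, y) - h y‖ₑ ^ 2 ∂ρ ∂μ := by
        gcongr with x
        exact enorm_integral_sq_le_lintegral_enorm_sq (by fun_prop)
    _ = ∫⁻ y, eVar[fun x => f (x, y); μ] ∂ρ :=
        lintegral_lintegral_swap (by fun_prop)

lemma evariance_prod_eq_lintegral_evariance_add_evariance_integral {μ : Measure Ω}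
    {ρ : Measure Ω'} [SFinite μ] [IsProbabilityMeasure ρ] {f : Ω × Ω' → ℝ} (hfm : Measurable f)
    (hf : Integrable f (μ.prod ρ)) :
    eVar[f; μ.prod ρ] =
      ∫⁻ x, eVar[fun y => f (x, y); ρ] ∂μ + eVar[fun x => ∫ y, f (x, y) ∂ρ; μ] := by
  calc eVar[f; μ.prod ρ]
      = ∫⁻ x, ∫⁻ y, ‖f (x, y) - ∫ p, f p ∂μ.prod ρ‖ₑ ^ 2 ∂ρ ∂μ :=
        lintegral_prod _ (by fun_prop)
    _ = ∫⁻ x, (eVar[fun y => f (x, y); ρ]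
          + ‖∫ y, f (x, y) ∂ρ - ∫ p, f p ∂μ.prod ρ‖ₑ ^ 2) ∂μ := by
        refine lintegral_congr_ae ?_
        filter_upwards [hf.prod_right_ae] with x hx
        exact lintegral_enorm_sub_sq_eq_evariance_add hx _
    _ = ∫⁻ x, eVar[fun y => f (x, y); ρ] ∂μ + eVar[fun x => ∫ y, f (x, y) ∂ρ; μ] := by
        rw [lintegral_add_left (measurable_evariance_prodMk_left hfm), evariance,
          integral_prod f hf]

lemma evariance_prod_le_lintegral_evariance_add {μ : Measure Ω} {ρ : Measure Ω'} [SFinite μ]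
    [IsProbabilityMeasure ρ] {f : Ω × Ω' → ℝ} (hfm : Measurable f)
    (hf : Integrable f (μ.prod ρ)) :
    eVar[f; μ.prod ρ] ≤
      ∫⁻ x, eVar[fun y => f (x, y); ρ] ∂μ + ∫⁻ y, eVar[fun x => f (x, y); μ] ∂ρ := by
  rw [evariance_prod_eq_lintegral_evariance_add_evariance_integral hfm hf]
  gcongr
  exact evariance_integral_le_lintegral_evariance hfm hf

lemma evariance_comp_le_of_lipschitzOnWith {μ : Measure Ω} [IsProbabilityMeasure μ] {X : Ω → ℝ}
    (hX : Integrable X μ) {K : ℝ≥0} {s : Set ℝ} {f : ℝ → ℝ} (hf : LipschitzOnWith K f s)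
    (hXs : ∀ᵐ ω ∂μ, X ω ∈ s) :
    eVar[fun ω => f (X ω); μ] ≤ K ^ 2 * eVar[X; μ] := by
  obtain ⟨g, g_lipschitz, hfg⟩ := hf.extend_real
  let m := ∫ ω, X ω ∂μ
  have g_sub_le (t : ℝ) : ‖g t - g m‖ₑ ≤ K * ‖t - m‖ₑ := by
    simpa only [edist_eq_enorm_sub] using g_lipschitz t m
  have gX_integrable : Integrable (fun ω => g (X ω)) μ := by
    have dominated : Integrable (fun ω => g (X ω) - g m) μ :=
      (hX.sub (integrable_const m)).norm.const_mul (K : ℝ) |>.mono'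
        ((g_lipschitz.continuous.comp_aestronglyMeasurable hX.1).sub aestronglyMeasurable_const)
        (ae_of_all μ fun ω => g_lipschitz.norm_sub_le (X ω) m)
    simpa only [Pi.add_def, sub_add_cancel] using dominated.add (integrable_const (g m))
  calc eVar[fun ω => f (X ω); μ]
      = eVar[fun ω => g (X ω); μ] := evariance_congr (hXs.mono fun ω hω => hfg hω)
    _ ≤ ∫⁻ ω, ‖g (X ω) - g m‖ₑ ^ 2 ∂μ := by
        rw [lintegral_enorm_sub_sq_eq_evariance_add gX_integrable]
        exact le_self_add
    _ ≤ ∫⁻ ω, K ^ 2 * ‖X ω - m‖ₑ ^ 2 ∂μ := by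
        gcongr with ω
        rw [← mul_pow]
        gcongr
        exact g_sub_le (X ω)
    _ = K ^ 2 * eVar[X; μ] :=
        lintegral_const_mul' _ _ (by finiteness)

end Variance

section Pi

variable {ι : Type*} {Ω : ι → Type*} [DecidableEq ι]

lemma finset_piecewise_comm_of_disjoint {s t : Finset ι} (hst : Disjoint s t)
    (ξ η ω : ∀ i, Ω i) :
    s.piecewise ξ (t.piecewise η ω) = t.piecewise η (s.piecewise ξ ω) := by
  ext i
  by_cases his : i ∈ s
  · simp [his, Finset.disjoint_left.1 hst his]
  · simp [Finset.piecewise, his]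

lemma finset_piecewise_union_piecewise (s t : Finset ι) (ξ η ω : ∀ i, Ω i) :
    (s ∪ t).piecewise (s.piecewise ξ η) ω = s.piecewise ξ (t.piecewise η ω) := by
  ext i
  by_cases his : i ∈ s <;> simp [Finset.piecewise, his]

variable [∀ i, MeasurableSpace (Ω i)]

lemma measurable_finset_piecewise (s : Finset ι) :
    Measurable fun p : (∀ i, Ω i) × (∀ i, Ω i) => s.piecewise p.1 p.2 := by
  refine measurable_pi_iff.2 fun i => ?_
  by_cases hi : i ∈ s <;> simp only [Finset.piecewise, hi, if_true, if_false] <;> fun_prop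

variable [Fintype ι] {μ : ∀ i, Measure (Ω i)}

variable (μ) in
/-- The conditional variance of `f` given the coordinates outside `s`, as an extended nonnegative
real: `ω` fixes these coordinates, while those in `s` are resampled independently. -/
noncomputable def evarianceOn (s : Finset ι) (f : (∀ i, Ω i) → ℝ) (ω : ∀ i, Ω i) : ℝ≥0∞ :=
  eVar[fun η => f (s.piecewise η ω); Measure.pi μ]

lemma evarianceOn_univ (f : (∀ i, Ω i) → ℝ) (ω : ∀ i, Ω i) :
    evarianceOn μ Finset.univ f ω = eVar[f; Measure.pi μ] := by
  simp only [evarianceOn, Finset.piecewise_univ]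

variable [∀ i, IsProbabilityMeasure (μ i)]

lemma measurePreserving_finset_piecewise (s : Finset ι) :
    MeasurePreserving (fun p : (∀ i, Ω i) × (∀ i, Ω i) => s.piecewise p.1 p.2)
      ((Measure.pi μ).prod (Measure.pi μ)) (Measure.pi μ) := by
  refine ⟨measurable_finset_piecewise s, (Measure.pi_eq fun A hA => ?_).symm⟩
  have preimage_box : (fun p : (∀ i, Ω i) × (∀ i, Ω i) => s.piecewise p.1 p.2) ⁻¹' Set.univ.pi A =
      (s : Set ι).pi A ×ˢ ((sᶜ : Finset ι) : Set ι).pi A := by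
    ext p
    simp only [Set.mem_preimage, Set.mem_prod, Set.mem_pi, Finset.mem_coe, Finset.mem_compl,
      ← forall_and]
    refine forall_congr' fun i => ?_
    by_cases hi : i ∈ s <;> simp [hi]
  rw [Measure.map_apply (measurable_finset_piecewise s) (.univ_pi hA), preimage_box,
    Measure.prod_prod, Measure.pi_pi_finset, Measure.pi_pi_finset, Finset.prod_mul_prod_compl]

lemma lintegral_lintegral_finset_piecewise (s : Finset ι) {h : (∀ i, Ω i) → ℝ≥0∞}
    (hh : Measurable h) :
    ∫⁻ ω, ∫⁻ η, h (s.piecewise η ω) ∂Measure.pi μ ∂Measure.pi μ = ∫⁻ ω, h ω ∂Measure.pi μ := by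
  have hs := measurePreserving_finset_piecewise (μ := μ) s
  rw [← hs.lintegral_comp hh]
  exact (lintegral_prod_symm' _ (hh.comp hs.measurable)).symm

lemma measurable_evarianceOn (s : Finset ι) {f : (∀ i, Ω i) → ℝ} (hf : Measurable f) :
    Measurable (evarianceOn μ s f) :=
  measurable_evariance_prodMk_left
    (hf.comp ((measurable_finset_piecewise s).comp measurable_swap))

lemma evarianceOn_empty (f : (∀ i, Ω i) → ℝ) (ω : ∀ i, Ω i) : evarianceOn μ ∅ f ω = 0 := by
  simp only [evarianceOn, Finset.piecewise_empty, evariance_const]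

lemma evarianceOn_singleton {f : (∀ i, Ω i) → ℝ} (hf : Measurable f) (i : ι) (ω : ∀ i, Ω i) :
    evarianceOn μ {i} f ω = eVar[fun x => f (Function.update ω i x); μ i] := by
  simp only [evarianceOn, Finset.piecewise_singleton]
  exact evariance_comp_measurePreserving (measurePreserving_eval μ i)
    (hf.comp (measurable_update ω))

lemma evariance_pi_le_lintegral_evariance_piecewise_add (s : Finset ι) {f : (∀ i, Ω i) → ℝ}
    (hfm : Measurable f) (hf : Integrable f (Measure.pi μ)) :
    eVar[f; Measure.pi μ] ≤
      ∫⁻ ω, eVar[fun η => f (s.piecewise η ω); Measure.pi μ] ∂Measure.pi μ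
      + ∫⁻ ω, eVar[fun η => f (s.piecewise ω η); Measure.pi μ] ∂Measure.pi μ := by
  have hs := measurePreserving_finset_piecewise (μ := μ) s
  rw [← evariance_comp_measurePreserving hs hfm, add_comm]
  exact evariance_prod_le_lintegral_evariance_add (hfm.comp hs.measurable)
    (hs.integrable_comp_of_integrable hf)

lemma lintegral_evarianceOn_union_le {s t : Finset ι} (hst : Disjoint s t)
    {f : (∀ i, Ω i) → ℝ} (hfm : Measurable f) (hf : Integrable f (Measure.pi μ)) :
    ∫⁻ ω, evarianceOn μ (s ∪ t) f ω ∂Measure.pi μ ≤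
      ∫⁻ ω, evarianceOn μ s f ω ∂Measure.pi μ + ∫⁻ ω, evarianceOn μ t f ω ∂Measure.pi μ := by
  have section_integrable : ∀ᵐ ω ∂Measure.pi μ,
      Integrable (fun η => f ((s ∪ t).piecewise η ω)) (Measure.pi μ) :=
    ((measurePreserving_finset_piecewise (s ∪ t)).integrable_comp_of_integrable hf).prod_left_ae
  have section_measurable (ω : ∀ i, Ω i) : Measurable fun η => f ((s ∪ t).piecewise η ω) :=
    hfm.comp ((measurable_finset_piecewise (s ∪ t)).comp measurable_prodMk_right)
  calc ∫⁻ ω, evarianceOn μ (s ∪ t) f ω ∂Measure.pi μ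
      ≤ ∫⁻ ω, (∫⁻ η, eVar[fun ξ => f (s.piecewise ξ (t.piecewise η ω)); Measure.pi μ]
            ∂Measure.pi μ
          + ∫⁻ ξ, eVar[fun η => f (s.piecewise ξ (t.piecewise η ω)); Measure.pi μ]
            ∂Measure.pi μ) ∂Measure.pi μ := by
        refine lintegral_mono_ae ?_
        filter_upwards [section_integrable] with ω hω
        simpa only [evarianceOn, finset_piecewise_union_piecewise] using
          evariance_pi_le_lintegral_evariance_piecewise_add s (section_measurable ω) hω
    _ = ∫⁻ ω, (∫⁻ η, evarianceOn μ s f (t.piecewise η ω) ∂Measure.pi μ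
          + ∫⁻ ξ, evarianceOn μ t f (s.piecewise ξ ω) ∂Measure.pi μ) ∂Measure.pi μ := by
        simp only [evarianceOn, finset_piecewise_comm_of_disjoint hst]
    _ = ∫⁻ ω, evarianceOn μ s f ω ∂Measure.pi μ + ∫⁻ ω, evarianceOn μ t f ω ∂Measure.pi μ := by
        have average_measurable :
            Measurable fun ω => ∫⁻ η, evarianceOn μ s f (t.piecewise η ω) ∂Measure.pi μ :=
          ((measurable_evarianceOn s hfm).comp
            (measurable_finset_piecewise t)).lintegral_prod_left'
        rw [lintegral_add_left average_measurable,
          lintegral_lintegral_finset_piecewise t (measurable_evarianceOn s hfm),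
          lintegral_lintegral_finset_piecewise s (measurable_evarianceOn t hfm)]

lemma lintegral_evarianceOn_le_sum (s : Finset ι) {f : (∀ i, Ω i) → ℝ} (hfm : Measurable f)
    (hf : Integrable f (Measure.pi μ)) :
    ∫⁻ ω, evarianceOn μ s f ω ∂Measure.pi μ ≤
      ∑ i ∈ s, ∫⁻ ω, evarianceOn μ {i} f ω ∂Measure.pi μ := by
  induction s using Finset.induction_on with
  | empty => simp only [evarianceOn_empty, lintegral_zero, Finset.sum_empty, le_refl]
  | insert i s hi ih =>
    rw [Finset.sum_insert hi, Finset.insert_eq]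
    grw [lintegral_evarianceOn_union_le (Finset.disjoint_singleton_left.2 hi) hfm hf, ih]

theorem evariance_pi_le_sum_lintegral_evariance_update {f : (∀ i, Ω i) → ℝ} (hfm : Measurable f)
    (hf : Integrable f (Measure.pi μ)) :
    eVar[f; Measure.pi μ] ≤
      ∑ i, ∫⁻ ω, eVar[fun x => f (Function.update ω i x); μ i] ∂Measure.pi μ := by
  simpa only [evarianceOn_univ, evarianceOn_singleton hfm, lintegral_const, measure_univ, mul_one]
    using lintegral_evarianceOn_le_sum (μ := μ) Finset.univ hfm hf

end Pi

lemma lipschitzOnWith_sqrt_iSup_deriv_sq {s : Set ℝ} (hs : Convex ℝ s) (hsc : IsCompact s)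
    {f f' : ℝ → ℝ} (hf : ∀ t ∈ s, HasDerivWithinAt f (f' t) s t) (hf' : ContinuousOn f' s) :
    LipschitzOnWith (√(⨆ t : s, f' t ^ 2)).toNNReal f s := by
  have deriv_sq_bddAbove : BddAbove (Set.range fun t : s => f' t ^ 2) := by
    rw [← Set.image_eq_range (fun t => f' t ^ 2) s]
    exact hsc.bddAbove_image (hf'.pow 2)
  refine hs.lipschitzOnWith_of_nnnorm_hasDerivWithin_le hf fun t ht => ?_
  rw [← norm_toNNReal]
  exact Real.toNNReal_le_toNNReal <| Real.abs_le_sqrt <| le_ciSup deriv_sq_bddAbove ⟨t, ht⟩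

lemma evariance_le_iSup_deriv_sq_mul {μ : Measure ℝ} [IsProbabilityMeasure μ] {s : Set ℝ}
    (hs : Convex ℝ s) (hsc : IsCompact s) (hμs : ∀ᵐ t ∂μ, t ∈ s)
    {f f' : ℝ → ℝ} (hf : ∀ t ∈ s, HasDerivWithinAt f (f' t) s t) (hf' : ContinuousOn f' s) :
    eVar[f; μ] ≤ ENNReal.ofReal (⨆ t : s, f' t ^ 2) * eVar[id; μ] := by
  have id_integrable : Integrable id μ := by
    rw [← Measure.restrict_eq_self_of_ae_mem hμs]
    exact continuousOn_id.integrableOn_compact hsc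
  calc eVar[f; μ]
      ≤ (√(⨆ t : s, f' t ^ 2)).toNNReal ^ 2 * eVar[id; μ] :=
        evariance_comp_le_of_lipschitzOnWith id_integrable
          (lipschitzOnWith_sqrt_iSup_deriv_sq hs hsc hf hf') hμs
    _ = ENNReal.ofReal (⨆ t : s, f' t ^ 2) * eVar[id; μ] := by
        rw [ENNReal.ofNNReal_toNNReal, ← ENNReal.ofReal_pow (Real.sqrt_nonneg _),
          Real.sq_sqrt (Real.iSup_nonneg fun _ => sq_nonneg _)]

lemma evariance_update_le_iSup_fderiv_sq_mul {E : Type*} [Fintype E] [DecidableEq E]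
    {X : (E → ℝ) → ℝ} (hX : ContDiff ℝ 1 X) (ω : E → ℝ) (e : E) {μ : Measure ℝ}
    [IsProbabilityMeasure μ] {s : Set ℝ} (hs : Convex ℝ s) (hsc : IsCompact s)
    (hμs : ∀ᵐ t ∂μ, t ∈ s) :
    eVar[fun t => X (Function.update ω e t); μ] ≤
      ENNReal.ofReal (⨆ t : s, (fderiv ℝ X (Function.update ω e (t : ℝ)) (Pi.single e 1)) ^ 2)
        * eVar[id; μ] := by
  have partial_hasDerivAt (t : ℝ) : HasDerivAt (fun t => X (Function.update ω e t))
      (fderiv ℝ X (Function.update ω e t) (Pi.single e 1)) t :=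
    (hX.differentiable one_ne_zero _).hasFDerivAt.comp_hasDerivAt t (hasDerivAt_update ω e t)
  have partial_continuous :
      Continuous fun t => fderiv ℝ X (Function.update ω e t) (Pi.single e 1) :=
    ((hX.continuous_fderiv one_ne_zero).comp
      (continuous_const.update e continuous_id)).clm_apply continuous_const
  exact evariance_le_iSup_deriv_sq_mul (f := fun t => X (Function.update ω e t))
    (f' := fun t => fderiv ℝ X (Function.update ω e t) (Pi.single e 1)) hs hsc hμs
    (fun t _ => (partial_hasDerivAt t).hasDerivWithinAt) partial_continuous.continuousOn

theorem statement18_general {E : Type*} [Fintype E] [DecidableEq E] {α β : E → ℝ}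
    (ν : E → Measure ℝ) [∀ e, IsProbabilityMeasure (ν e)]
    (hν : ∀ e, ν e (Set.Icc (α e) (β e)) = 1) (X : (E → ℝ) → ℝ) (hX : ContDiff ℝ 1 X) :
    eVar[X; Measure.pi ν] ≤
      ∑ e, (∫⁻ ω, ENNReal.ofReal
          (⨆ t : Set.Icc (α e) (β e),
            (fderiv ℝ X (Function.update ω e (t : ℝ)) (Pi.single e 1)) ^ 2)
          ∂Measure.pi ν)
        * ENNReal.ofReal ((∫ t, t ^ 2 ∂ν e) - (∫ t, t ∂ν e) ^ 2) := by
  have ae_mem_Icc (e : E) : ∀ᵐ t ∂ν e, t ∈ Set.Icc (α e) (β e) :=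
    (mem_ae_iff_prob_eq_one measurableSet_Icc).2 (hν e)
  have ae_mem_box : ∀ᵐ ω ∂Measure.pi ν, ω ∈ Set.univ.pi fun e => Set.Icc (α e) (β e) :=
    (mem_ae_iff_prob_eq_one (.univ_pi fun _ => measurableSet_Icc)).2 (by
      rw [Measure.pi_pi]; simp only [hν, Finset.prod_const_one])
  have X_integrable : Integrable X (Measure.pi ν) := by
    rw [← Measure.restrict_eq_self_of_ae_mem ae_mem_box]
    exact hX.continuous.continuousOn.integrableOn_compact
      (isCompact_univ_pi fun _ => isCompact_Icc)
  have evariance_id (e : E) :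
      eVar[id; ν e] = ENNReal.ofReal ((∫ t, t ^ 2 ∂ν e) - (∫ t, t ∂ν e) ^ 2) := by
    have id_memLp : MemLp id 2 (ν e) :=
      memLp_of_bounded (ae_mem_Icc e) aestronglyMeasurable_id 2
    rw [← ofReal_variance id_memLp, variance_eq_sub id_memLp]
    rfl
  grw [evariance_pi_le_sum_lintegral_evariance_update hX.continuous.measurable X_integrable]
  gcongr with e
  rw [← lintegral_mul_const' _ _ ENNReal.ofReal_ne_top, ← evariance_id e]
  gcongr with ω
  exact evariance_update_le_iSup_fderiv_sq_mul hX ω e (convex_Icc _ _) isCompact_Icc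
    (ae_mem_Icc e)

/-- spectral gap / derivative-form Efron–Stein inequality: for `ℙ = ν^⊗E`
an i.i.d. product measure on `[α,β]^E` and `X : ℝ^E → ℝ` continuously differentiable,
`Var_ℙ(X) ≤ (Σ_{e∈E} E_ℙ[ sup_{t∈[α,β]} |∂X/∂x_e(ω[e↦t])|² ]) · σ²(ν)`. -/
theorem statement18 {E : Type*} [Fintype E] [Nonempty E] [DecidableEq E]
    {α β : ℝ} (hα : 0 < α) (hαβ : α ≤ β)
    (ν : Measure ℝ) [IsProbabilityMeasure ν] (hν : ν (Set.Icc α β) = 1)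
    (X : (E → ℝ) → ℝ) (hX : ContDiff ℝ 1 X) :
    ENNReal.ofReal (ProbabilityTheory.variance X (Measure.pi fun _ : E => ν)) ≤
      (∑ e : E, ∫⁻ ω, ENNReal.ofReal
          (⨆ t : Set.Icc α β,
            (fderiv ℝ X (Function.update ω e (t : ℝ)) (Pi.single e 1)) ^ 2)
          ∂(Measure.pi fun _ : E => ν))
        * ENNReal.ofReal ((∫ t, t ^ 2 ∂ν) - (∫ t, t ∂ν) ^ 2) := by
  rw [Finset.sum_mul]
  exact ENNReal.ofReal_toReal_le.trans (statement18_general (fun _ => ν) (fun _ => hν) X hX)
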